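/- Thin-PID reformulation of the synergy optimization (Theorem 3.3): let Σ_Y be a positive definite d_Y × d_Y real matrix, let H₁ ∈ ℝ^{d₁ × d_Y}, H₂ ∈ ℝ^{d₂ × d_Y}, and let H := [H₁; H₂] be their vertical concatenation. For Y ~ N(0, Σ_Y) and independent noises (n₁, n₂) jointly Gaussian with cov(n₁) = I_{d₁}, cov(n₂) = I_{d₂} and (n₁, n₂) independent of Y, set X₁ = H₁ Y + n₁ and X₂ = H₂ Y + n₂. Then the infimum of I((X₁, X₂); Y) over all jointly Gaussian distributions q of (X₁, X₂, Y) whose (X₁, Y)-marginal and (X₂, Y)-marginal are the prescribed Gaussians equals (1/2) · inf over matrices M ∈ ℝ^{d₁ × d₂} such that Σ_{n₁n₂}(M) := fromBlocks I_{d₁} M Mᵀ I_{d₂} is positive definite of log( det(H Σ_Y Hᵀ + Σ_{n₁n₂}(M)) / det Σ_{n₁n₂}(M) ). -/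

import Mathlib

/-!
A Gaussian law of `(X₁, X₂, Y)` with the prescribed pairwise marginals is centered, and its
covariance is fixed except for the cross-covariance of `X₁` and `X₂`. Hence it is the law of
`(H Y + n, Y)` with noise covariance `N(M) = fromBlocks 1 M Mᵀ 1` for some `M`, where `N(M)` is
positive semidefinite (`IsGaussianMeasure.exists_isCenteredGaussian_channelCov`). When `N(M)` is
positive definite, the relative entropy of Gaussian densities gives the mutual information
`(1/2) log (det (H Σ_Y Hᵀ + N(M)) / det N(M))`.

What remains is that a law with singular `N(M)` does not lower the infimum. For `0 < c < 1`, adding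
an independent `N(0, (c⁻¹ - 1) I)` noise to `(X₁, X₂)` does not increase the mutual information, by
the data processing inequality, and makes the noise covariance `N(M) + (c⁻¹ - 1) I = c⁻¹ N(c M)`.
Thus `c M` is admissible, and by monotonicity of the determinant its value exceeds that of the
noisier law by at most `-(d₁ + d₂) / 2 * log c`, which tends to `0` as `c → 1`.

Singular Gaussian laws have no density. They are handled through the fact that a centered Gaussian
law is determined by its covariance (`IsCenteredGaussian.measure_ext`).
-/

open MeasureTheory Matrix

open Classical in
/-- Kullback–Leibler divergence `KL(P ‖ Q)`, valued in `EReal`. -/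
noncomputable def klDiv {α : Type*} [MeasurableSpace α] (P Q : Measure α) : EReal :=
  if P ≪ Q ∧ Integrable (fun x => Real.log (P.rnDeriv Q x).toReal) P
  then ((∫ x, Real.log (P.rnDeriv Q x).toReal ∂P : ℝ) : EReal)
  else ⊤

/-- Mutual information of a measure on a product space: `I(P) := KL(P ‖ P₁ ⊗ P₂)`. -/
noncomputable def mutualInfo {α β : Type*} [MeasurableSpace α] [MeasurableSpace β]
    (P : Measure (α × β)) : EReal :=
  klDiv P ((P.map Prod.fst).prod (P.map Prod.snd))

/-- The multivariate Gaussian measure `N(m, S)` on `ι → ℝ`, defined by its density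
with respect to Lebesgue measure. -/
noncomputable def mvGaussian {ι : Type*} [Fintype ι] [DecidableEq ι]
    (m : ι → ℝ) (S : Matrix ι ι ℝ) : Measure (ι → ℝ) :=
  volume.withDensity fun x =>
    ENNReal.ofReal ((Real.sqrt ((2 * Real.pi) ^ (Fintype.card ι) * S.det))⁻¹ *
      Real.exp (-(1/2) * ((x - m) ⬝ᵥ (S⁻¹ *ᵥ (x - m)))))

/-- A probability measure on a finite-dimensional space is (jointly) Gaussian iff
every linear functional pushes it forward to a one-dimensional Gaussian
(possibly degenerate). -/
def IsGaussianMeasure {ι : Type*} [Fintype ι] (q : Measure (ι → ℝ)) : Prop :=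
  IsProbabilityMeasure q ∧
    ∀ L : (ι → ℝ) →ₗ[ℝ] ℝ, ∃ m v, q.map L = ProbabilityTheory.gaussianReal m v

/-- Coordinate restriction `(x₁, x₂, y) ↦ (x₁, y)`. -/
def restrict₁Y {d₁ d₂ dY : ℕ} (x : ((Fin d₁ ⊕ Fin d₂) ⊕ Fin dY) → ℝ) :
    (Fin d₁ ⊕ Fin dY) → ℝ :=
  Sum.elim (fun a => x (Sum.inl (Sum.inl a))) (fun b => x (Sum.inr b))

/-- Coordinate restriction `(x₁, x₂, y) ↦ (x₂, y)`. -/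
def restrict₂Y {d₁ d₂ dY : ℕ} (x : ((Fin d₁ ⊕ Fin d₂) ⊕ Fin dY) → ℝ) :
    (Fin d₂ ⊕ Fin dY) → ℝ :=
  Sum.elim (fun a => x (Sum.inl (Sum.inr a))) (fun b => x (Sum.inr b))

open ProbabilityTheory

/-! ### Centered Gaussian laws with possibly singular covariance -/

/-- `IsCenteredGaussian μ S`: `μ` is a centered Gaussian law on `ι → ℝ` with covariance matrix `S`.
Unlike `mvGaussian 0 S`, this allows singular `S`, and so all the couplings that compete in the
infimum. -/
structure IsCenteredGaussian {ι : Type*} [Fintype ι] (μ : Measure (ι → ℝ)) (S : Matrix ι ι ℝ) :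
    Prop where
  isGaussian : IsGaussian μ
  integral_eval : ∀ i, ∫ x, x i ∂μ = 0
  integral_eval_mul : ∀ i j, ∫ x, x i * x j ∂μ = S i j

theorem measurable_mulVec {ι κ : Type*} [Fintype ι] (A : Matrix κ ι ℝ) :
    Measurable fun x : ι → ℝ => A *ᵥ x := by
  unfold mulVec dotProduct
  fun_prop

theorem integral_eval_map {α ι : Type*} [MeasurableSpace α] {ρ : Measure α} {g : α → ι → ℝ}
    (hg : Measurable g) (i : ι) : ∫ x, x i ∂(ρ.map g) = ∫ a, g a i ∂ρ :=
  integral_map hg.aemeasurable (measurable_pi_apply i).aestronglyMeasurable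

theorem integral_eval_mul_map {α ι : Type*} [MeasurableSpace α] {ρ : Measure α} {g : α → ι → ℝ}
    (hg : Measurable g) (i j : ι) : ∫ x, x i * x j ∂(ρ.map g) = ∫ a, g a i * g a j ∂ρ :=
  integral_map hg.aemeasurable
    ((measurable_pi_apply i).mul (measurable_pi_apply j)).aestronglyMeasurable

theorem dotProduct_mulVec_eq_sum {ι : Type*} [Fintype ι] (B : Matrix ι ι ℝ) (x : ι → ℝ) :
    x ⬝ᵥ (B *ᵥ x) = ∑ i, ∑ j, B i j * (x i * x j) := by
  simp only [dotProduct, mulVec, Finset.mul_sum]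
  exact Finset.sum_congr rfl fun i _ => Finset.sum_congr rfl fun j _ => by ring

section Gaussian

variable {ι : Type*} {μ : Measure (ι → ℝ)}

theorem memLp_eval_of_isGaussian [Finite ι] [IsGaussian μ] (i : ι) : MemLp (fun x => x i) 2 μ := by
  cases nonempty_fintype ι
  exact IsGaussian.memLp_dual μ (ContinuousLinearMap.proj (R := ℝ) (φ := fun _ => ℝ) i) 2 (by simp)

theorem integrable_eval_mul_of_isGaussian [Finite ι] [IsGaussian μ] (i j : ι) :
    Integrable (fun x => x i * x j) μ :=
  (memLp_eval_of_isGaussian i).integrable_mul (memLp_eval_of_isGaussian j)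

theorem integrable_quadratic_of_isGaussian [Fintype ι] [IsGaussian μ] (B : Matrix ι ι ℝ) :
    Integrable (fun x => x ⬝ᵥ (B *ᵥ x)) μ := by
  simp only [dotProduct_mulVec_eq_sum]
  exact integrable_finsetSum _ fun i _ => integrable_finsetSum _ fun j _ =>
    (integrable_eval_mul_of_isGaussian i j).const_mul (B i j)

end Gaussian

namespace IsCenteredGaussian

variable {ι κ : Type*} [Fintype ι] [Fintype κ] {μ ν : Measure (ι → ℝ)} {S T : Matrix ι ι ℝ}

theorem isProbabilityMeasure (h : IsCenteredGaussian μ S) : IsProbabilityMeasure μ :=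
  h.isGaussian.toIsProbabilityMeasure

theorem cov_ext (h : IsCenteredGaussian μ S) (h' : IsCenteredGaussian μ T) : S = T := by
  ext i j
  rw [← h.integral_eval_mul, h'.integral_eval_mul]

theorem isSymm (h : IsCenteredGaussian μ S) : S.IsSymm := by
  ext i j
  simp only [transpose_apply, ← h.integral_eval_mul, mul_comm]

theorem integral_dotProduct_mulVec (h : IsCenteredGaussian μ S) (B : Matrix ι ι ℝ) :
    ∫ x, x ⬝ᵥ (B *ᵥ x) ∂μ = (B * S).trace := by
  have := h.isGaussian
  have hint (i j : ι) : Integrable (fun x => B i j * (x i * x j)) μ :=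
    (integrable_eval_mul_of_isGaussian i j).const_mul (B i j)
  simp only [dotProduct_mulVec_eq_sum, trace, diag, mul_apply]
  rw [integral_finsetSum _ fun i _ => integrable_finsetSum _ fun j _ => hint i j]
  refine Finset.sum_congr rfl fun i _ => ?_
  rw [integral_finsetSum _ fun j _ => hint i j]
  refine Finset.sum_congr rfl fun j _ => ?_
  rw [integral_const_mul, h.integral_eval_mul, h.isSymm.apply]

theorem integral_dotProduct (h : IsCenteredGaussian μ S) (t : ι → ℝ) :
    ∫ x, t ⬝ᵥ x ∂μ = 0 := by
  have := h.isGaussian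
  simp only [dotProduct]
  rw [integral_finsetSum _ fun i _ =>
    ((memLp_eval_of_isGaussian i).integrable one_le_two).const_mul (t i)]
  simp [integral_const_mul, h.integral_eval]

theorem integral_dotProduct_mul_dotProduct (h : IsCenteredGaussian μ S) (s t : ι → ℝ) :
    ∫ x, (s ⬝ᵥ x) * (t ⬝ᵥ x) ∂μ = s ⬝ᵥ (S *ᵥ t) := by
  have hform (x : ι → ℝ) : (s ⬝ᵥ x) * (t ⬝ᵥ x) = x ⬝ᵥ (vecMulVec s t *ᵥ x) := by
    rw [vecMulVec_mulVec, op_smul_eq_smul, dotProduct_smul, smul_eq_mul, mul_comm,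
      dotProduct_comm s]
  simp_rw [hform]
  rw [h.integral_dotProduct_mulVec, vecMulVec_mul, trace_vecMulVec, ← mulVec_transpose,
    h.isSymm.eq]

theorem posSemidef (h : IsCenteredGaussian μ S) : S.PosSemidef := by
  refine .of_dotProduct_mulVec_nonneg ?_ fun t => ?_
  · simpa [IsHermitian] using h.isSymm.eq
  · rw [star_trivial, ← h.integral_dotProduct_mul_dotProduct]
    exact integral_nonneg fun x => mul_self_nonneg _

theorem measure_ext (h : IsCenteredGaussian μ S) (h' : IsCenteredGaussian ν S) : μ = ν := by
  classical
  have := h.isGaussian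
  have := h'.isGaussian
  refine Measure.ext_of_charFunDual (funext fun L => ?_)
  obtain ⟨t, ht⟩ := (dotProductEquiv ℝ ι).surjective L.toLinearMap
  replace ht : ⇑L = fun x => t ⬝ᵥ x := congrArg DFunLike.coe ht.symm
  have hvar {ρ : Measure (ι → ℝ)} (hρ : IsCenteredGaussian ρ S) : Var[L; ρ] = t ⬝ᵥ (S *ᵥ t) := by
    rw [variance_of_integral_eq_zero (by fun_prop) (by rw [ht, hρ.integral_dotProduct]), ht,
      ← hρ.integral_dotProduct_mul_dotProduct]
    simp only [sq]
  rw [IsGaussian.charFunDual_eq, IsGaussian.charFunDual_eq, hvar h, hvar h',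
    integral_complex_ofReal, integral_complex_ofReal, ht,
    h.integral_dotProduct, h'.integral_dotProduct]

theorem map_mulVec (h : IsCenteredGaussian μ S) (A : Matrix κ ι ℝ) :
    IsCenteredGaussian (μ.map fun x => A *ᵥ x) (A * S * Aᵀ) := by
  have := h.isGaussian
  refine ⟨isGaussian_map (LinearMap.toContinuousLinearMap A.mulVecLin), fun i => ?_, fun i j => ?_⟩
  · rw [integral_eval_map (measurable_mulVec A)]
    exact h.integral_dotProduct (A i)
  · rw [integral_eval_mul_map (measurable_mulVec A), Matrix.mul_assoc]
    refine (h.integral_dotProduct_mul_dotProduct (A i) (A j)).trans ?_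
    simp [mul_apply, dotProduct, mulVec]

theorem map_comp (h : IsCenteredGaussian μ S) (f : κ → ι) :
    IsCenteredGaussian (μ.map fun x => x ∘ f) (S.submatrix f f) := by
  have := h.isGaussian
  have hf : Measurable fun x : ι → ℝ => x ∘ f := by
    unfold Function.comp
    fun_prop
  refine ⟨isGaussian_map (LinearMap.toContinuousLinearMap (LinearMap.funLeft ℝ ℝ f)), fun i => ?_,
    fun i j => ?_⟩
  · rw [integral_eval_map hf]
    exact h.integral_eval (f i)
  · rw [integral_eval_mul_map hf]
    exact h.integral_eval_mul (f i) (f j)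

theorem dirac_zero : IsCenteredGaussian (Measure.dirac (0 : ι → ℝ)) 0 :=
  ⟨inferInstance, fun i => by simp, fun i j => by simp⟩

theorem prod (h : IsCenteredGaussian μ S) {ν : Measure (κ → ℝ)} {T : Matrix κ κ ℝ}
    (h' : IsCenteredGaussian ν T) :
    IsCenteredGaussian ((μ.prod ν).map (MeasurableEquiv.sumPiEquivProdPi fun _ => ℝ).symm)
      (fromBlocks S 0 0 T) := by
  have := h.isGaussian
  have := h'.isGaussian
  have he := (MeasurableEquiv.sumPiEquivProdPi fun _ : ι ⊕ κ => ℝ).symm.measurable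
  refine ⟨isGaussian_map
    (ContinuousLinearEquiv.sumPiEquivProdPi ℝ ι κ fun _ => ℝ).symm.toContinuousLinearMap,
    fun i => ?_, fun i j => ?_⟩
  · rw [integral_eval_map he]
    rcases i with i | i
    · exact (integral_fun_fst fun x : ι → ℝ => x i).trans (by simp [h.integral_eval])
    · exact (integral_fun_snd fun y : κ → ℝ => y i).trans (by simp [h'.integral_eval])
  · rw [integral_eval_mul_map he]
    rcases i with i | i <;> rcases j with j | j
    · exact (integral_fun_fst fun x : ι → ℝ => x i * x j).trans (by simp [h.integral_eval_mul])
    · exact (integral_prod_mul (fun x : ι → ℝ => x i) fun y : κ → ℝ => y j).trans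
        (by simp [h.integral_eval])
    · simp_rw [mul_comm]
      exact (integral_prod_mul (fun x : ι → ℝ => x j) fun y : κ → ℝ => y i).trans
        (by simp [h.integral_eval])
    · exact (integral_fun_snd fun y : κ → ℝ => y i * y j).trans (by simp [h'.integral_eval_mul])

theorem conv (h : IsCenteredGaussian μ S) (h' : IsCenteredGaussian ν T) :
    IsCenteredGaussian (μ ∗ ν) (S + T) := by
  classical
  have := h.isProbabilityMeasure
  have := h'.isProbabilityMeasure
  convert (h.prod h').map_mulVec (fromCols (1 : Matrix ι ι ℝ) 1) using 1
  · rw [Measure.conv, Measure.map_map (measurable_mulVec _) (MeasurableEquiv.measurable _)]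
    congr 1
    ext p i
    simp only [Function.comp_apply, fromCols_mulVec, one_mulVec, Pi.add_apply]
    rfl
  · simp [fromCols_mul_fromBlocks, transpose_fromCols, fromCols_mul_fromRows]

theorem isGaussianMeasure (h : IsCenteredGaussian μ S) : IsGaussianMeasure μ :=
  have := h.isGaussian
  ⟨h.isProbabilityMeasure, fun L => ⟨_, _, IsGaussian.map_eq_gaussianReal L.toContinuousLinearMap⟩⟩

end IsCenteredGaussian

theorem IsGaussianMeasure.isCenteredGaussian {ι : Type*} [Fintype ι] {q : Measure (ι → ℝ)}
    (hq : IsGaussianMeasure q) (h0 : ∀ i, ∫ x, x i ∂q = 0) :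
    IsCenteredGaussian q (.of fun i j => ∫ x, x i * x j ∂q) where
  isGaussian := isGaussian_of_map_eq_gaussianReal fun L => hq.2 L.toLinearMap
  integral_eval := h0
  integral_eval_mul _ _ := rfl

theorem isCenteredGaussian_map_multivariateGaussian {ι : Type*} [Fintype ι] [DecidableEq ι]
    {S : Matrix ι ι ℝ} (hS : S.PosSemidef) :
    IsCenteredGaussian ((multivariateGaussian 0 S).map WithLp.ofLp) S := by
  have hofLp : Measurable (WithLp.ofLp : EuclideanSpace ℝ ι → ι → ℝ) := by fun_prop
  have hmean (i : ι) : ∫ x : EuclideanSpace ℝ ι, x i ∂(multivariateGaussian 0 S) = 0 := by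
    have h := measurePreserving_eval_multivariateGaussian (μ := 0) hS (i := i)
    simpa using (integral_map h.aemeasurable aestronglyMeasurable_id).symm.trans
      (congrArg (fun ρ : Measure ℝ => ∫ y, y ∂ρ) h.map_eq)
  refine ⟨isGaussian_map (EuclideanSpace.equiv ι ℝ).toContinuousLinearMap, fun i => ?_,
    fun i j => ?_⟩
  · rw [integral_eval_map hofLp, hmean]
  · rw [integral_eval_mul_map hofLp, ← covariance_eval_multivariateGaussian (μ := 0) hS i j,
      covariance, hmean, hmean]
    simp

theorem isCenteredGaussian_pi_gaussianReal (ι : Type*) [Fintype ι] [DecidableEq ι] :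
    IsCenteredGaussian (Measure.pi fun _ : ι => gaussianReal 0 1) 1 := by
  have h := isCenteredGaussian_map_multivariateGaussian (PosSemidef.one (n := ι) (R := ℝ))
  rw [multivariateGaussian_zero_one, ← map_pi_eq_stdGaussian,
    Measure.map_map (by fun_prop) (by fun_prop)] at h
  exact (Measure.map_id (μ := Measure.pi fun _ : ι => gaussianReal 0 1)) ▸ h

/-! ### Densities -/

theorem pi_withDensity_ofReal {ι : Type*} [Fintype ι] {X : ι → Type*} [∀ i, MeasurableSpace (X i)]
    {μ : ∀ i, Measure (X i)} [∀ i, SigmaFinite (μ i)] {f : ∀ i, X i → ℝ}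
    (hf : ∀ i, Integrable (f i) (μ i)) (hf0 : ∀ i x, 0 ≤ f i x) :
    (Measure.pi fun i => (μ i).withDensity fun y => ENNReal.ofReal (f i y))
      = (Measure.pi μ).withDensity fun x => ENNReal.ofReal (∏ i, f i (x i)) := by
  have (i : ι) : IsFiniteMeasure ((μ i).withDensity fun y => ENNReal.ofReal (f i y)) :=
    isFiniteMeasure_withDensity_ofReal (hf i).2
  refine Measure.pi_eq fun s hs => ?_
  rw [withDensity_apply _ (.univ_pi hs), Measure.restrict_pi_pi,
    ← ofReal_integral_eq_lintegral_ofReal (.fintype_prod_dep fun i => (hf i).restrict)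
      (ae_of_all _ fun x => Finset.prod_nonneg fun i _ => hf0 i _),
    integral_fintype_prod_eq_prod, ENNReal.ofReal_prod_of_nonneg fun i _ => integral_nonneg (hf0 i)]
  refine Finset.prod_congr rfl fun i _ => ?_
  rw [withDensity_apply _ (hs i),
    ofReal_integral_eq_lintegral_ofReal (hf i).restrict (ae_of_all _ (hf0 i))]

theorem map_withDensity_comp {α β : Type*} [MeasurableSpace α] [MeasurableSpace β] (μ : Measure α)
    {g : α → β} (hg : Measurable g) {f : β → ENNReal} (hf : Measurable f) :
    (μ.withDensity fun x => f (g x)).map g = (μ.map g).withDensity f := by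
  ext s hs
  rw [Measure.map_apply hg hs, withDensity_apply _ (hg hs), withDensity_apply _ hs,
    setLIntegral_map hs hf hg]

theorem map_mulVec_withDensity {ι : Type*} [Fintype ι] [DecidableEq ι] {B : Matrix ι ι ℝ}
    (hB : B.det ≠ 0) {f : (ι → ℝ) → ENNReal} (hf : Measurable f) :
    ((volume.withDensity fun x => ENNReal.ofReal |B.det| * f (B *ᵥ x)).map fun x => B *ᵥ x)
      = volume.withDensity f := by
  have hvol : ((volume : Measure (ι → ℝ)).map fun x => B *ᵥ x)
      = ENNReal.ofReal |B.det⁻¹| • volume := Real.map_matrix_volume_pi_eq_smul_volume_pi hB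
  rw [map_withDensity_comp volume (measurable_mulVec B) (hf.const_mul (ENNReal.ofReal |B.det|)),
    hvol, withDensity_smul_measure]
  refine (withDensity_smul' _ _ ENNReal.ofReal_ne_top).symm.trans (congrArg _ (funext fun x => ?_))
  simp only [Pi.smul_apply, smul_eq_mul]
  rw [← mul_assoc, ← ENNReal.ofReal_mul (abs_nonneg _), ← abs_mul, inv_mul_cancel₀ hB]
  simp

section Density

variable {ι : Type*} [Fintype ι] [DecidableEq ι]

/-- The density of the centered Gaussian law `mvGaussian 0 S`. -/
noncomputable def mvGaussianPDFReal (S : Matrix ι ι ℝ) (x : ι → ℝ) : ℝ :=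
  (√((2 * Real.pi) ^ Fintype.card ι * S.det))⁻¹ * Real.exp (-(1 / 2) * (x ⬝ᵥ (S⁻¹ *ᵥ x)))

theorem mvGaussian_zero (S : Matrix ι ι ℝ) :
    mvGaussian 0 S = volume.withDensity fun x => ENNReal.ofReal (mvGaussianPDFReal S x) := by
  simp [mvGaussian, mvGaussianPDFReal]

theorem measurable_mvGaussianPDFReal (S : Matrix ι ι ℝ) : Measurable (mvGaussianPDFReal S) := by
  unfold mvGaussianPDFReal dotProduct mulVec dotProduct
  fun_prop

theorem mvGaussianPDFReal_one (x : ι → ℝ) :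
    mvGaussianPDFReal 1 x = ∏ i, gaussianPDFReal 0 1 (x i) := by
  simp only [mvGaussianPDFReal, gaussianPDFReal, det_one, inv_one, one_mulVec, mul_one, sub_zero,
    NNReal.coe_one, Finset.prod_mul_distrib, Finset.prod_const, Finset.card_univ, ← Real.exp_sum,
    inv_pow, Real.sqrt_eq_rpow, dotProduct, Finset.mul_sum]
  rw [Real.rpow_pow_comm (by positivity)]
  congr 3
  funext i
  ring

theorem mvGaussianPDFReal_mul_transpose {B : Matrix ι ι ℝ} (hB : B.det ≠ 0) (x : ι → ℝ) :
    |B.det| * mvGaussianPDFReal (B * Bᵀ) (B *ᵥ x) = mvGaussianPDFReal 1 x := by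
  have hu : IsUnit B.det := hB.isUnit
  have hform : (B *ᵥ x) ⬝ᵥ ((B * Bᵀ)⁻¹ *ᵥ (B *ᵥ x)) = x ⬝ᵥ x := by
    rw [Matrix.mul_inv_rev, mulVec_mulVec, Matrix.mul_assoc, nonsing_inv_mul _ hu, Matrix.mul_one,
      dotProduct_comm, dotProduct_mulVec, ← mulVec_transpose, mulVec_mulVec,
      mul_nonsing_inv _ (by rwa [det_transpose]), one_mulVec]
  have hdet : √((2 * Real.pi) ^ Fintype.card ι * (B * Bᵀ).det)
      = |B.det| * √((2 * Real.pi) ^ Fintype.card ι) := by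
    rw [det_mul, det_transpose, Real.sqrt_mul (by positivity), Real.sqrt_mul_self_eq_abs, mul_comm]
  rw [mvGaussianPDFReal, mvGaussianPDFReal, hform, hdet, det_one, inv_one, one_mulVec, mul_one,
    mul_inv, ← mul_assoc, ← mul_assoc, mul_inv_cancel₀ (abs_ne_zero.mpr hB), one_mul]

theorem pi_gaussianReal_eq_mvGaussian :
    (Measure.pi fun _ : ι => gaussianReal 0 1) = mvGaussian 0 1 := by
  simp only [mvGaussian_zero, mvGaussianPDFReal_one, gaussianReal_of_var_ne_zero _ one_ne_zero]
  exact pi_withDensity_ofReal (fun _ => integrable_gaussianPDFReal 0 1)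
    fun _ => gaussianPDFReal_nonneg 0 1

theorem map_mulVec_pi_gaussianReal {B : Matrix ι ι ℝ} (hB : B.det ≠ 0) :
    (Measure.pi fun _ : ι => gaussianReal 0 1).map (fun x => B *ᵥ x) = mvGaussian 0 (B * Bᵀ) := by
  rw [pi_gaussianReal_eq_mvGaussian, mvGaussian_zero, mvGaussian_zero, ← map_mulVec_withDensity hB
    (measurable_mvGaussianPDFReal (B * Bᵀ)).ennreal_ofReal]
  simp only [← ENNReal.ofReal_mul (abs_nonneg _), mvGaussianPDFReal_mul_transpose hB]

theorem exists_eq_mul_transpose {S : Matrix ι ι ℝ} (hS : S.PosDef) :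
    ∃ B : Matrix ι ι ℝ, S = B * Bᵀ ∧ B.det ≠ 0 := by
  open scoped MatrixOrder in
  obtain ⟨B, hB, rfl⟩ := CStarAlgebra.isStrictlyPositive_iff_eq_star_mul_self.mp
    hS.isStrictlyPositive
  refine ⟨Bᵀ, by simp [star_eq_conjTranspose], ?_⟩
  rw [det_transpose]
  exact ((isUnit_iff_isUnit_det B).mp hB).ne_zero

theorem isCenteredGaussian_mvGaussian {S : Matrix ι ι ℝ} (hS : S.PosDef) :
    IsCenteredGaussian (mvGaussian 0 S) S := by
  obtain ⟨B, rfl, hB⟩ := exists_eq_mul_transpose hS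
  rw [← map_mulVec_pi_gaussianReal hB]
  simpa using (isCenteredGaussian_pi_gaussianReal ι).map_mulVec B

end Density

/-! ### Relative entropy of Gaussian laws -/

theorem klDiv_eq_coe {α : Type*} [MeasurableSpace α] (P Q : Measure α) [IsProbabilityMeasure P]
    [IsProbabilityMeasure Q] : klDiv P Q = (InformationTheory.klDiv P Q : EReal) := by
  unfold klDiv
  split_ifs with h
  · have hn := InformationTheory.integral_llr_add_sub_measure_univ_nonneg h.1 h.2
    rw [InformationTheory.klDiv_of_ac_of_integrable h.1 h.2, EReal.coe_ennreal_ofReal,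
      max_eq_left hn]
    simp [llr]
  · rw [InformationTheory.klDiv_eq_top_iff.mpr fun hac hint => h ⟨hac, hint⟩, EReal.coe_ennreal_top]

theorem klDiv_map_le {α β : Type*} [MeasurableSpace α] [MeasurableSpace β] (P Q : Measure α)
    [IsProbabilityMeasure P] [IsProbabilityMeasure Q] {f : α → β} (hf : Measurable f) :
    klDiv (P.map f) (Q.map f) ≤ klDiv P Q := by
  have := Measure.isProbabilityMeasure_map (μ := P) hf.aemeasurable
  have := Measure.isProbabilityMeasure_map (μ := Q) hf.aemeasurable
  rw [klDiv_eq_coe, klDiv_eq_coe, EReal.coe_ennreal_le_coe_ennreal_iff]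
  exact InformationTheory.klDiv_map_le P Q hf

theorem klDiv_map_measurableEquiv {α β : Type*} [MeasurableSpace α] [MeasurableSpace β]
    (P Q : Measure α) [IsProbabilityMeasure P] [IsProbabilityMeasure Q] (e : α ≃ᵐ β) :
    klDiv (P.map e) (Q.map e) = klDiv P Q := by
  have := Measure.isProbabilityMeasure_map (μ := P) e.measurable.aemeasurable
  have := Measure.isProbabilityMeasure_map (μ := Q) e.measurable.aemeasurable
  refine le_antisymm (klDiv_map_le P Q e.measurable) ?_
  simpa using klDiv_map_le (P.map e) (Q.map e) e.symm.measurable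

theorem klDiv_withDensity_exp {α : Type*} [MeasurableSpace α] {Q : Measure α} [SigmaFinite Q]
    {g : α → ℝ} (hg : Measurable g)
    (hint : Integrable g (Q.withDensity fun x => ENNReal.ofReal (Real.exp (g x)))) :
    klDiv (Q.withDensity fun x => ENNReal.ofReal (Real.exp (g x))) Q
      = ((∫ x, g x ∂(Q.withDensity fun x => ENNReal.ofReal (Real.exp (g x))) : ℝ) : EReal) := by
  set P := Q.withDensity fun x => ENNReal.ofReal (Real.exp (g x))
  have hac : P ≪ Q := withDensity_absolutelyContinuous _ _
  have hlog : (fun x => Real.log (P.rnDeriv Q x).toReal) =ᵐ[P] g := by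
    have hderiv : P.rnDeriv Q =ᵐ[P] fun x => ENNReal.ofReal (Real.exp (g x)) :=
      hac.ae_le (Measure.rnDeriv_withDensity _ (by fun_prop))
    filter_upwards [hderiv] with x hx
    rw [hx, ENNReal.toReal_ofReal (Real.exp_pos _).le, Real.log_exp]
  rw [klDiv, if_pos ⟨hac, hint.congr hlog.symm⟩, integral_congr_ae hlog]

section GaussianKL

variable {ι : Type*} [Fintype ι] [DecidableEq ι] {S T : Matrix ι ι ℝ}

/-- The log-likelihood ratio of `mvGaussian 0 S` to `mvGaussian 0 T`, for positive definite `S`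
and `T`. -/
noncomputable def mvGaussianLLR (S T : Matrix ι ι ℝ) (x : ι → ℝ) : ℝ :=
  1 / 2 * Real.log (T.det / S.det) + 1 / 2 * (x ⬝ᵥ ((T⁻¹ - S⁻¹) *ᵥ x))

theorem measurable_mvGaussianLLR (S T : Matrix ι ι ℝ) : Measurable (mvGaussianLLR S T) := by
  unfold mvGaussianLLR dotProduct mulVec dotProduct
  fun_prop

theorem mvGaussianPDFReal_mul_exp_mvGaussianLLR (hS : S.PosDef) (hT : T.PosDef) (x : ι → ℝ) :
    mvGaussianPDFReal T x * Real.exp (mvGaussianLLR S T x) = mvGaussianPDFReal S x := by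
  have hS0 := hS.det_pos
  have hT0 := hT.det_pos
  have hlog : Real.exp (1 / 2 * Real.log (T.det / S.det)) = √T.det / √S.det := by
    rw [← Real.sqrt_div hT0.le, Real.sqrt_eq_rpow, Real.rpow_def_of_pos (by positivity), mul_comm]
  have hform : Real.exp (-(1 / 2) * (x ⬝ᵥ (T⁻¹ *ᵥ x)))
      * Real.exp (1 / 2 * (x ⬝ᵥ ((T⁻¹ - S⁻¹) *ᵥ x))) = Real.exp (-(1 / 2) * (x ⬝ᵥ (S⁻¹ *ᵥ x))) := by
    rw [← Real.exp_add, sub_mulVec, dotProduct_sub]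
    ring_nf
  rw [mvGaussianLLR, Real.exp_add, hlog, mvGaussianPDFReal, mvGaussianPDFReal, ← hform,
    Real.sqrt_mul (by positivity), Real.sqrt_mul (by positivity)]
  field_simp

theorem mvGaussian_withDensity_exp_mvGaussianLLR (hS : S.PosDef) (hT : T.PosDef) :
    (mvGaussian 0 T).withDensity (fun x => ENNReal.ofReal (Real.exp (mvGaussianLLR S T x)))
      = mvGaussian 0 S := by
  have hpdf (x : ι → ℝ) : 0 ≤ mvGaussianPDFReal T x := by
    unfold mvGaussianPDFReal
    positivity
  rw [mvGaussian_zero, mvGaussian_zero, ← withDensity_mul _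
    (measurable_mvGaussianPDFReal T).ennreal_ofReal
    (measurable_mvGaussianLLR S T).exp.ennreal_ofReal]
  congr 1
  funext x
  rw [Pi.mul_apply, ← ENNReal.ofReal_mul (hpdf x), mvGaussianPDFReal_mul_exp_mvGaussianLLR hS hT]

theorem integrable_mvGaussianLLR_of_isGaussian (μ : Measure (ι → ℝ)) [IsGaussian μ]
    (S T : Matrix ι ι ℝ) : Integrable (mvGaussianLLR S T) μ :=
  (integrable_const _).add ((integrable_quadratic_of_isGaussian (T⁻¹ - S⁻¹)).const_mul (1 / 2))

theorem IsCenteredGaussian.integral_mvGaussianLLR {μ : Measure (ι → ℝ)}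
    (hμ : IsCenteredGaussian μ S) (hS : S.PosDef) (T : Matrix ι ι ℝ) :
    ∫ x, mvGaussianLLR S T x ∂μ
      = 1 / 2 * (Real.log (T.det / S.det) + (T⁻¹ * S).trace - Fintype.card ι) := by
  have := hμ.isGaussian
  have hquad : Integrable (fun x => x ⬝ᵥ ((T⁻¹ - S⁻¹) *ᵥ x)) μ :=
    integrable_quadratic_of_isGaussian _
  simp only [mvGaussianLLR]
  rw [integral_add (integrable_const _) (hquad.const_mul _), integral_const, probReal_univ,
    one_smul, integral_const_mul, hμ.integral_dotProduct_mulVec, Matrix.sub_mul,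
    nonsing_inv_mul S hS.det_pos.ne'.isUnit, trace_sub, trace_one]
  ring

theorem IsCenteredGaussian.klDiv_eq {μ ν : Measure (ι → ℝ)} (hμ : IsCenteredGaussian μ S)
    (hν : IsCenteredGaussian ν T) (hS : S.PosDef) (hT : T.PosDef) :
    klDiv μ ν = ((1 / 2 * (Real.log (T.det / S.det) + (T⁻¹ * S).trace - Fintype.card ι) : ℝ)
      : EReal) := by
  have := hν.isProbabilityMeasure
  have hdens : μ = ν.withDensity fun x => ENNReal.ofReal (Real.exp (mvGaussianLLR S T x)) := by
    rw [hν.measure_ext (isCenteredGaussian_mvGaussian hT),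
      mvGaussian_withDensity_exp_mvGaussianLLR hS hT]
    exact hμ.measure_ext (isCenteredGaussian_mvGaussian hS)
  have := hμ.isGaussian
  have hint := integrable_mvGaussianLLR_of_isGaussian μ S T
  have heq := hμ.integral_mvGaussianLLR hS T
  rw [hdens] at hint heq
  rw [hdens, klDiv_withDensity_exp (measurable_mvGaussianLLR S T) hint, heq]

end GaussianKL

theorem posDef_fromBlocks_zero {α β : Type*} [Finite α] [Finite β] {A : Matrix α α ℝ}
    {D : Matrix β β ℝ} (hA : A.PosDef) (hD : D.PosDef) : (fromBlocks A 0 0 D).PosDef := by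
  classical
  cases nonempty_fintype α
  cases nonempty_fintype β
  have := hD.isUnit.invertible
  have hpsd : (fromBlocks A 0 0 D).PosSemidef := by
    simpa using (PosDef.fromBlocks₂₂ A 0 hD).mpr (by simpa using hA.posSemidef)
  rw [hpsd.posDef_iff_det_ne_zero, det_fromBlocks_zero₂₁]
  exact (mul_pos hA.det_pos hD.det_pos).ne'

section MutualInformation

variable {α β : Type*} [Fintype α] [Fintype β] {A : Matrix α α ℝ} {B : Matrix α β ℝ}
  {C : Matrix β α ℝ} {D : Matrix β β ℝ} {μ : Measure (α ⊕ β → ℝ)}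

theorem IsCenteredGaussian.prod_marginals (hμ : IsCenteredGaussian μ (fromBlocks A B C D)) :
    IsCenteredGaussian
      ((((μ.map (MeasurableEquiv.sumPiEquivProdPi fun _ => ℝ)).map Prod.fst).prod
        ((μ.map (MeasurableEquiv.sumPiEquivProdPi fun _ => ℝ)).map Prod.snd)).map
          (MeasurableEquiv.sumPiEquivProdPi fun _ => ℝ).symm) (fromBlocks A 0 0 D) := by
  rw [Measure.map_map (by fun_prop) (by fun_prop), Measure.map_map (by fun_prop) (by fun_prop)]
  exact (hμ.map_comp Sum.inl).prod (hμ.map_comp Sum.inr)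

theorem IsCenteredGaussian.mutualInfo_eq [DecidableEq α] [DecidableEq β]
    (hμ : IsCenteredGaussian μ (fromBlocks A B C D)) (hpd : (fromBlocks A B C D).PosDef) :
    mutualInfo (μ.map (MeasurableEquiv.sumPiEquivProdPi fun _ => ℝ))
      = ((1 / 2 * Real.log (A.det * D.det / (fromBlocks A B C D).det) : ℝ) : EReal) := by
  have hA : A.PosDef := hpd.submatrix Sum.inl_injective
  have hD : D.PosDef := hpd.submatrix Sum.inr_injective
  have htrace : ((fromBlocks A 0 0 D)⁻¹ * fromBlocks A B C D).trace = Fintype.card (α ⊕ β) := by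
    rw [inv_fromBlocks_zero₂₁_of_isUnit_iff _ _ _ (iff_of_true hA.isUnit hD.isUnit),
      fromBlocks_multiply]
    simp [trace, nonsing_inv_mul _ hA.det_pos.ne'.isUnit, nonsing_inv_mul _ hD.det_pos.ne'.isUnit]
  set e := MeasurableEquiv.sumPiEquivProdPi fun _ : α ⊕ β => ℝ
  have := hμ.isProbabilityMeasure
  have := Measure.isProbabilityMeasure_map (μ := μ) e.measurable.aemeasurable
  have := Measure.isProbabilityMeasure_map (μ := μ.map e) measurable_fst.aemeasurable
  have := Measure.isProbabilityMeasure_map (μ := μ.map e) measurable_snd.aemeasurable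
  rw [mutualInfo, ← klDiv_map_measurableEquiv _ _ e.symm, e.map_symm_map,
    hμ.klDiv_eq hμ.prod_marginals hpd (posDef_fromBlocks_zero hA hD), det_fromBlocks_zero₂₁, htrace,
    add_sub_cancel_right]

end MutualInformation

/-! ### Data processing for additive noise -/

instance measurableAdd₂_prod {α β : Type*} [MeasurableSpace α] [MeasurableSpace β] [Add α] [Add β]
    [MeasurableAdd₂ α] [MeasurableAdd₂ β] : MeasurableAdd₂ (α × β) :=
  ⟨.prodMk (measurable_fst.fst.add measurable_snd.fst) (measurable_fst.snd.add measurable_snd.snd)⟩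

theorem klDiv_prod_right {α β : Type*} [MeasurableSpace α] [MeasurableSpace β] (P Q : Measure α)
    (R : Measure β) [IsProbabilityMeasure P] [IsProbabilityMeasure Q] [IsProbabilityMeasure R] :
    klDiv (P.prod R) (Q.prod R) = klDiv P Q := by
  rw [klDiv_eq_coe, klDiv_eq_coe, ← Measure.compProd_const, ← Measure.compProd_const,
    InformationTheory.klDiv_compProd_left]

section Convolution

variable {α β : Type*} [MeasurableSpace α] [MeasurableSpace β] [AddMonoid α] [AddMonoid β]
  [MeasurableAdd₂ α] [MeasurableAdd₂ β]

theorem klDiv_conv_le (P Q R : Measure α) [IsProbabilityMeasure P] [IsProbabilityMeasure Q]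
    [IsProbabilityMeasure R] : klDiv (P ∗ R) (Q ∗ R) ≤ klDiv P Q :=
  (klDiv_map_le (P.prod R) (Q.prod R) measurable_add).trans_eq (klDiv_prod_right P Q R)

theorem prod_conv_prod (μ ρ : Measure α) (ν τ : Measure β) [SFinite μ] [SFinite ν] [SFinite ρ]
    [SFinite τ] : μ.prod ν ∗ ρ.prod τ = (μ ∗ ρ).prod (ν ∗ τ) := by
  refine Measure.ext_of_lintegral _ fun f hf => ?_
  rw [Measure.lintegral_conv hf, lintegral_prod _ (by fun_prop), lintegral_prod _ (by fun_prop),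
    Measure.lintegral_conv (by fun_prop)]
  refine lintegral_congr fun x => ?_
  have hinner (y : β) :
      ∫⁻ z, f ((x, y) + z) ∂(ρ.prod τ) = ∫⁻ x', ∫⁻ y', f (x + x', y + y') ∂τ ∂ρ :=
    lintegral_prod _ (by fun_prop)
  simp_rw [hinner]
  rw [lintegral_lintegral_swap (by fun_prop)]
  refine lintegral_congr fun x' => ?_
  rw [Measure.lintegral_conv (by fun_prop)]

theorem mutualInfo_conv_prod_le (P : Measure (α × β)) (ρ : Measure α) (τ : Measure β)
    [IsProbabilityMeasure P] [IsProbabilityMeasure ρ] [IsProbabilityMeasure τ] :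
    mutualInfo (P ∗ ρ.prod τ) ≤ mutualInfo P := by
  have := Measure.isProbabilityMeasure_map (μ := P) measurable_fst.aemeasurable
  have := Measure.isProbabilityMeasure_map (μ := P) measurable_snd.aemeasurable
  have hfst : (P ∗ ρ.prod τ).map Prod.fst = P.map Prod.fst ∗ ρ := by
    simpa using Measure.map_conv_addMonoidHom (μ := P) (ν := ρ.prod τ) (.fst α β) measurable_fst
  have hsnd : (P ∗ ρ.prod τ).map Prod.snd = P.map Prod.snd ∗ τ := by
    simpa using Measure.map_conv_addMonoidHom (μ := P) (ν := ρ.prod τ) (.snd α β) measurable_snd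
  rw [mutualInfo, hfst, hsnd, ← prod_conv_prod]
  exact klDiv_conv_le _ _ _

end Convolution

/-! ### The Gaussian channel -/

section Determinant

variable {α : Type*} [Fintype α] [DecidableEq α]

theorem one_le_det_one_add {P : Matrix α α ℝ} (hP : P.PosSemidef) : 1 ≤ (1 + P).det := by
  have hdet : (1 + P).det = ∏ i, (1 + hP.isHermitian.eigenvalues i) := by
    refine mul_left_cancel₀ (pow_ne_zero (Fintype.card α) (neg_ne_zero.mpr (one_ne_zero' ℝ))) ?_
    have h := congrArg (Polynomial.eval (-1)) hP.isHermitian.charpoly_eq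
    rw [eval_charpoly, map_neg, map_one, ← neg_add', det_neg] at h
    simpa only [Polynomial.eval_prod, Polynomial.eval_sub, Polynomial.eval_X, Polynomial.eval_C,
      ← neg_add', Finset.prod_neg, Finset.card_univ, RCLike.ofReal_real_eq_id, id]
      using h
  rw [hdet]
  exact Finset.one_le_prod fun i => by simpa using hP.eigenvalues_nonneg i

theorem det_le_det_add {B P : Matrix α α ℝ} (hB : B.PosDef) (hP : P.PosSemidef) :
    B.det ≤ (B + P).det := by
  obtain ⟨L, rfl, hL⟩ := exists_eq_mul_transpose hB
  have hu : IsUnit L.det := hL.isUnit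
  have hut : IsUnit Lᵀ.det := by rwa [det_transpose]
  have hP' : (L⁻¹ * P * L⁻¹ᵀ).PosSemidef := by
    simpa using hP.mul_mul_conjTranspose_same L⁻¹
  have hfactor : L * Lᵀ + P = L * (1 + L⁻¹ * P * L⁻¹ᵀ) * Lᵀ := by
    simp [Matrix.mul_add, Matrix.add_mul, transpose_nonsing_inv, Matrix.mul_assoc,
      mul_nonsing_inv_cancel_left _ _ hu, nonsing_inv_mul _ hut]
  rw [hfactor, det_mul, det_mul, det_mul, det_transpose]
  nlinarith [mul_self_nonneg L.det, one_le_det_one_add hP']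

end Determinant

section Channel

variable {α β : Type*} [Fintype β]

/-- The covariance of `(H Y + n, Y)` for independent `Y` and `n` with covariances `S` and `N`. -/
def channelCov (H : Matrix α β ℝ) (S : Matrix β β ℝ) (N : Matrix α α ℝ) :
    Matrix (α ⊕ β) (α ⊕ β) ℝ :=
  fromBlocks (H * S * Hᵀ + N) (H * S) (S * Hᵀ) S

theorem channelCov_add_fromBlocks (H : Matrix α β ℝ) (S : Matrix β β ℝ) (N R : Matrix α α ℝ) :
    channelCov H S N + fromBlocks R 0 0 0 = channelCov H S (N + R) := by
  simp [channelCov, fromBlocks_add, add_assoc]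

theorem channelCov_eq_mul [Fintype α] [DecidableEq α] [DecidableEq β]
    (H : Matrix α β ℝ) (S : Matrix β β ℝ) (N : Matrix α α ℝ) :
    channelCov H S N = fromBlocks 1 H 0 1 * fromBlocks N 0 0 S * (fromBlocks 1 H 0 1)ᵀ := by
  simp [channelCov, fromBlocks_multiply, fromBlocks_transpose, add_comm]

theorem det_channelCov [Fintype α] [DecidableEq α] [DecidableEq β] (H : Matrix α β ℝ)
    (S : Matrix β β ℝ) (N : Matrix α α ℝ) : (channelCov H S N).det = N.det * S.det := by
  simp [channelCov_eq_mul]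

theorem posDef_channelCov [Finite α] (H : Matrix α β ℝ) {S : Matrix β β ℝ} {N : Matrix α α ℝ}
    (hS : S.PosDef) (hN : N.PosDef) : (channelCov H S N).PosDef := by
  classical
  cases nonempty_fintype α
  have hpsd : (channelCov H S N).PosSemidef := by
    simpa [channelCov_eq_mul] using
      (posDef_fromBlocks_zero hN hS).posSemidef.mul_mul_conjTranspose_same (fromBlocks 1 H 0 1)
  rw [hpsd.posDef_iff_det_ne_zero, det_channelCov]
  exact (mul_pos hN.det_pos hS.det_pos).ne'

theorem posSemidef_noise_of_channelCov [Finite α] {H : Matrix α β ℝ} {S : Matrix β β ℝ}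
    {N : Matrix α α ℝ} (h : (channelCov H S N).PosSemidef) : N.PosSemidef := by
  classical
  cases nonempty_fintype α
  -- `n = (H Y + n) - H Y`
  have hnoise : fromCols (1 : Matrix α α ℝ) (-H) * channelCov H S N
      * (fromCols (1 : Matrix α α ℝ) (-H))ᵀ = N := by
    simp [channelCov, fromCols_mul_fromBlocks, transpose_fromCols, fromCols_mul_fromRows,
      Matrix.mul_assoc]
  simpa only [conjTranspose_eq_transpose_of_trivial, hnoise] using
    h.mul_mul_conjTranspose_same (fromCols 1 (-H))

variable [Fintype α] [DecidableEq α]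

/-- The mutual information `I(H Y + n; Y)` for independent centered Gaussian `Y` and `n` with
covariances `S` and `N`; meaningful only for invertible `N`. -/
noncomputable def channelInfo (H : Matrix α β ℝ) (S : Matrix β β ℝ) (N : Matrix α α ℝ) : ℝ :=
  1 / 2 * Real.log ((H * S * Hᵀ + N).det / N.det)

theorem channelInfo_smul_le (H : Matrix α β ℝ) {S : Matrix β β ℝ} {N : Matrix α α ℝ}
    (hS : S.PosSemidef) (hN : N.PosDef) {c : ℝ} (hc0 : 0 < c) (hc1 : c ≤ 1) :
    channelInfo H S (c • N) ≤ channelInfo H S N - Fintype.card α / 2 * Real.log c := by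
  have hsignal : (H * S * Hᵀ).PosSemidef := by simpa using hS.mul_mul_conjTranspose_same H
  have hcN : (c • N).PosDef := hN.smul hc0
  have hle : (H * S * Hᵀ + c • N).det ≤ (H * S * Hᵀ + N).det := by
    have hrest : H * S * Hᵀ + N = H * S * Hᵀ + c • N + (1 - c) • N := by module
    rw [hrest]
    exact det_le_det_add (hcN.posSemidef_add hsignal) (hN.posSemidef.smul (by linarith))
  have hpos := (hcN.posSemidef_add hsignal).det_pos
  have hlog := Real.log_le_log hpos hle
  rw [channelInfo, channelInfo, det_smul,
    Real.log_div hpos.ne' (mul_pos (pow_pos hc0 _) hN.det_pos).ne',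
    Real.log_div (hpos.trans_le hle).ne' hN.det_pos.ne',
    Real.log_mul (pow_pos hc0 _).ne' hN.det_pos.ne', Real.log_pow]
  linarith

namespace IsCenteredGaussian

variable {H : Matrix α β ℝ} {S : Matrix β β ℝ} {N R : Matrix α α ℝ}
  {μ : Measure (α ⊕ β → ℝ)}

theorem mutualInfo_eq_channelInfo (hμ : IsCenteredGaussian μ (channelCov H S N)) (hS : S.PosDef)
    (hN : N.PosDef) :
    mutualInfo (μ.map (MeasurableEquiv.sumPiEquivProdPi fun _ => ℝ))
      = (channelInfo H S N : EReal) := by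
  classical
  rw [hμ.mutualInfo_eq (posDef_channelCov H hS hN), ← channelCov, det_channelCov,
    mul_div_mul_right _ _ hS.det_pos.ne', channelInfo]

theorem channelInfo_add_le_mutualInfo (hμ : IsCenteredGaussian μ (channelCov H S N))
    (hS : S.PosDef) (hR : R.PosSemidef) (hNR : (N + R).PosDef) :
    (channelInfo H S (N + R) : EReal)
      ≤ mutualInfo (μ.map (MeasurableEquiv.sumPiEquivProdPi fun _ => ℝ)) := by
  have hρ := isCenteredGaussian_map_multivariateGaussian hR
  set ρ := (multivariateGaussian 0 R).map WithLp.ofLp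
  set e := MeasurableEquiv.sumPiEquivProdPi fun _ : α ⊕ β => ℝ
  have := hμ.isProbabilityMeasure
  have := hρ.isProbabilityMeasure
  have := Measure.isProbabilityMeasure_map (μ := μ) e.measurable.aemeasurable
  have hsum := hμ.conv (hρ.prod (dirac_zero (ι := β)))
  rw [channelCov_add_fromBlocks] at hsum
  have hmap : (μ ∗ (ρ.prod (.dirac 0)).map e.symm).map e = μ.map e ∗ ρ.prod (.dirac 0) := by
    refine (Measure.map_conv_continuousLinearMap
      (ContinuousLinearEquiv.sumPiEquivProdPi ℝ α β fun _ => ℝ).toContinuousLinearMap).trans ?_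
    exact congrArg (μ.map e ∗ ·) e.map_map_symm
  rw [← hsum.mutualInfo_eq_channelInfo hS hNR, hmap]
  exact mutualInfo_conv_prod_le _ _ _

theorem channelInfo_smul_add_smul_one_le (hμ : IsCenteredGaussian μ (channelCov H S N))
    (hS : S.PosDef) {c : ℝ} (hc0 : 0 < c) (hc1 : c < 1) :
    (channelInfo H S (c • N + (1 - c) • 1) : EReal)
      ≤ mutualInfo (μ.map (MeasurableEquiv.sumPiEquivProdPi fun _ => ℝ))
        + (-(Fintype.card α / 2 * Real.log c) : ℝ) := by
  have hN := posSemidef_noise_of_channelCov hμ.posSemidef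
  have hs : 0 < c⁻¹ * (1 - c) := mul_pos (inv_pos.mpr hc0) (by linarith)
  set R : Matrix α α ℝ := (c⁻¹ * (1 - c)) • 1
  have hR : R.PosDef := PosDef.one.smul hs
  have hNR : (N + R).PosDef := hR.posSemidef_add hN
  have hsplit : c • N + (1 - c) • 1 = c • (N + R) := by
    rw [smul_add, smul_smul, mul_inv_cancel_left₀ hc0.ne']
  calc (channelInfo H S (c • N + (1 - c) • 1) : EReal)
      ≤ (channelInfo H S (N + R) + -(Fintype.card α / 2 * Real.log c) : ℝ) := by
        rw [hsplit, EReal.coe_le_coe_iff, ← sub_eq_add_neg]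
        exact channelInfo_smul_le H hS.posSemidef hNR hc0 hc1.le
    _ ≤ _ := by
        rw [EReal.coe_add]
        gcongr
        exact hμ.channelInfo_add_le_mutualInfo hS hR.posSemidef hNR

end IsCenteredGaussian

end Channel

/-! ### Couplings with prescribed pairwise marginals -/

theorem restrict₁Y_eq_comp {d₁ d₂ dY : ℕ} (x : (Fin d₁ ⊕ Fin d₂) ⊕ Fin dY → ℝ) :
    restrict₁Y x = x ∘ Sum.map Sum.inl id := by
  ext (i | i) <;> rfl

theorem restrict₂Y_eq_comp {d₁ d₂ dY : ℕ} (x : (Fin d₁ ⊕ Fin d₂) ⊕ Fin dY → ℝ) :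
    restrict₂Y x = x ∘ Sum.map Sum.inr id := by
  ext (i | i) <;> rfl

theorem smul_fromBlocks_one_add_smul_one {α₁ α₂ : Type*} [DecidableEq α₁] [DecidableEq α₂]
    (M : Matrix α₁ α₂ ℝ) (c : ℝ) :
    c • fromBlocks 1 M Mᵀ 1 + (1 - c) • 1 = fromBlocks 1 (c • M) (c • M)ᵀ 1 := by
  rw [← fromBlocks_one, fromBlocks_smul, fromBlocks_smul, fromBlocks_add]
  congr 1 <;> simp [← add_smul]

theorem posDef_smul_add_smul_one {α : Type*} [DecidableEq α] {N : Matrix α α ℝ}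
    (hN : N.PosSemidef) {c : ℝ} (hc0 : 0 ≤ c) (hc1 : c < 1) : (c • N + (1 - c) • 1).PosDef :=
  (PosDef.one.smul (sub_pos.mpr hc1)).posSemidef_add (hN.smul hc0)

theorem le_of_forall_le_add_neg_mul_log {x y : EReal} {k : ℝ}
    (h : ∀ c : ℝ, 0 < c → c < 1 → x ≤ y + (-(k * Real.log c) : ℝ)) : x ≤ y := by
  have hreal : Filter.Tendsto (fun c : ℝ => -(k * Real.log c)) (nhdsWithin 1 (Set.Iio 1))
      (nhds 0) := by
    have hcont : ContinuousAt (fun c : ℝ => -(k * Real.log c)) 1 := by fun_prop (disch := simp)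
    simpa using hcont.tendsto.mono_left nhdsWithin_le_nhds
  have hadd := (EReal.continuousAt_add (p := (y, ((0 : ℝ) : EReal))) (.inr (EReal.coe_ne_bot 0))
    (.inr (EReal.coe_ne_top 0))).tendsto.comp
      (tendsto_const_nhds.prodMk_nhds ((continuous_coe_real_ereal.tendsto 0).comp hreal))
  have hle : x ≤ y + ((0 : ℝ) : EReal) := ge_of_tendsto hadd <| by
    filter_upwards [Ioo_mem_nhdsLT one_pos] with c hc using h c hc.1 hc.2
  simpa using hle

section Coupling

variable {α₁ α₂ β : Type*} [Fintype β] {H₁ : Matrix α₁ β ℝ} {H₂ : Matrix α₂ β ℝ} {S : Matrix β β ℝ}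

theorem channelCov_submatrix_inl (H₁ : Matrix α₁ β ℝ) (H₂ : Matrix α₂ β ℝ) (S : Matrix β β ℝ)
    (A : Matrix α₁ α₁ ℝ) (M : Matrix α₁ α₂ ℝ) (C : Matrix α₂ α₁ ℝ) (D : Matrix α₂ α₂ ℝ) :
    (channelCov (fromRows H₁ H₂) S (fromBlocks A M C D)).submatrix (Sum.map Sum.inl id)
      (Sum.map Sum.inl id) = channelCov H₁ S A := by
  ext (i | i) (j | j) <;> simp [channelCov, mul_apply]

theorem channelCov_submatrix_inr (H₁ : Matrix α₁ β ℝ) (H₂ : Matrix α₂ β ℝ) (S : Matrix β β ℝ)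
    (A : Matrix α₁ α₁ ℝ) (M : Matrix α₁ α₂ ℝ) (C : Matrix α₂ α₁ ℝ) (D : Matrix α₂ α₂ ℝ) :
    (channelCov (fromRows H₁ H₂) S (fromBlocks A M C D)).submatrix (Sum.map Sum.inr id)
      (Sum.map Sum.inr id) = channelCov H₂ S D := by
  ext (i | i) (j | j) <;> simp [channelCov, mul_apply]

theorem exists_eq_channelCov {T : Matrix ((α₁ ⊕ α₂) ⊕ β) ((α₁ ⊕ α₂) ⊕ β) ℝ} {A : Matrix α₁ α₁ ℝ}
    {D : Matrix α₂ α₂ ℝ} (hT : T.IsSymm)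
    (h₁ : T.submatrix (Sum.map Sum.inl id) (Sum.map Sum.inl id) = channelCov H₁ S A)
    (h₂ : T.submatrix (Sum.map Sum.inr id) (Sum.map Sum.inr id) = channelCov H₂ S D) :
    ∃ M, T = channelCov (fromRows H₁ H₂) S (fromBlocks A M Mᵀ D) := by
  have e₁ i j := congrFun₂ h₁ i j
  have e₂ i j := congrFun₂ h₂ i j
  have hS : Sᵀ = S := by
    ext i j
    simpa [channelCov, ← e₁ (.inr i) (.inr j)] using
      (e₁ (.inr j) (.inr i)).symm.trans ((hT.apply _ _).trans (e₁ (.inr i) (.inr j)))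
  have hcross : H₂ * S * H₁ᵀ = (H₁ * S * H₂ᵀ)ᵀ := by
    simp [transpose_mul, hS, Matrix.mul_assoc]
  refine ⟨.of fun i j => T (.inl (.inl i)) (.inl (.inr j)) - (H₁ * S * H₂ᵀ) i j, ?_⟩
  rw [channelCov, transpose_fromRows, fromRows_mul, fromRows_mul_fromCols, mul_fromCols, hcross]
  -- Every block other than the cross-covariance of the first two lies in a prescribed submatrix.
  ext ((i | i) | i) ((j | j) | j)
  · simpa [channelCov] using e₁ (.inl i) (.inl j)
  · simp
  · simpa [channelCov] using e₁ (.inl i) (.inr j)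
  · simp [← hT.apply (.inl (.inl j)) (.inl (.inr i)), -transpose_mul]
  · simpa [channelCov] using e₂ (.inl i) (.inl j)
  · simpa [channelCov] using e₂ (.inl i) (.inr j)
  · simpa [channelCov] using e₁ (.inr i) (.inl j)
  · simpa [channelCov] using e₂ (.inr i) (.inl j)
  · simpa [channelCov] using e₁ (.inr i) (.inr j)

variable [Fintype α₁] [Fintype α₂] {μ : Measure ((α₁ ⊕ α₂) ⊕ β → ℝ)}

theorem IsGaussianMeasure.exists_isCenteredGaussian_channelCov {A : Matrix α₁ α₁ ℝ}
    {D : Matrix α₂ α₂ ℝ} (hμ : IsGaussianMeasure μ)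
    (h₁ : IsCenteredGaussian (μ.map fun x => x ∘ Sum.map Sum.inl id) (channelCov H₁ S A))
    (h₂ : IsCenteredGaussian (μ.map fun x => x ∘ Sum.map Sum.inr id) (channelCov H₂ S D)) :
    ∃ M, IsCenteredGaussian μ (channelCov (fromRows H₁ H₂) S (fromBlocks A M Mᵀ D)) := by
  have hmean₁ i : ∫ x, x (Sum.map Sum.inl id i) ∂μ = 0 :=
    (integral_eval_map (g := fun x => x ∘ Sum.map Sum.inl id) (by fun_prop) i).symm.trans
      (h₁.integral_eval i)
  have hmean₂ i : ∫ x, x (Sum.map Sum.inr id i) ∂μ = 0 :=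
    (integral_eval_map (g := fun x => x ∘ Sum.map Sum.inr id) (by fun_prop) i).symm.trans
      (h₂.integral_eval i)
  have hmean : ∀ i, ∫ x, x i ∂μ = 0
    | .inl (.inl i) => hmean₁ (.inl i)
    | .inl (.inr i) => hmean₂ (.inl i)
    | .inr i => hmean₁ (.inr i)
  have hT := hμ.isCenteredGaussian hmean
  obtain ⟨M, hM⟩ := exists_eq_channelCov hT.isSymm ((hT.map_comp _).cov_ext h₁)
    ((hT.map_comp _).cov_ext h₂)
  exact ⟨M, hM ▸ hT⟩

theorem iInf_channelInfo_le_mutualInfo [DecidableEq α₁] [DecidableEq α₂] {M : Matrix α₁ α₂ ℝ}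
    (hμ : IsCenteredGaussian μ (channelCov (fromRows H₁ H₂) S (fromBlocks 1 M Mᵀ 1)))
    (hS : S.PosDef) :
    ⨅ M' ∈ {M' : Matrix α₁ α₂ ℝ | (fromBlocks 1 M' M'ᵀ 1).PosDef},
        (channelInfo (fromRows H₁ H₂) S (fromBlocks 1 M' M'ᵀ 1) : EReal)
      ≤ mutualInfo (μ.map (MeasurableEquiv.sumPiEquivProdPi fun _ => ℝ)) := by
  have hN := posSemidef_noise_of_channelCov hμ.posSemidef
  refine le_of_forall_le_add_neg_mul_log (k := Fintype.card (α₁ ⊕ α₂) / 2) fun c hc0 hc1 => ?_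
  have hpd := posDef_smul_add_smul_one hN hc0.le hc1
  have hle := hμ.channelInfo_smul_add_smul_one_le hS hc0 hc1
  rw [smul_fromBlocks_one_add_smul_one] at hpd hle
  exact (iInf₂_le (c • M) hpd).trans hle

end Coupling

/-- **Thin-PID reformulation of the synergy optimization** (Theorem 3.3):
for `Y ~ N(0, Σ_Y)` with `Σ_Y` positive definite, `X₁ = H₁ Y + n₁`, `X₂ = H₂ Y + n₂` with
whitened noises, the infimum of `I((X₁, X₂); Y)` over all jointly Gaussian laws of
`(X₁, X₂, Y)` with the prescribed pairwise Gaussian marginals equals the infimum over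
cross-covariances `M` (with `fromBlocks I M Mᵀ I` positive definite) of
`(1/2) · log(det(H Σ_Y Hᵀ + Σ_{n₁n₂}(M)) / det Σ_{n₁n₂}(M))`, where `H = [H₁; H₂]`. -/
theorem thinPID_synergy_reformulation
    {d₁ d₂ dY : ℕ} (SY : Matrix (Fin dY) (Fin dY) ℝ) (hSY : SY.PosDef)
    (H₁ : Matrix (Fin d₁) (Fin dY) ℝ) (H₂ : Matrix (Fin d₂) (Fin dY) ℝ) :
    (⨅ q ∈ {q : Measure (((Fin d₁ ⊕ Fin d₂) ⊕ Fin dY) → ℝ) |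
        IsGaussianMeasure q ∧
        q.map restrict₁Y
          = mvGaussian 0 (fromBlocks (H₁ * SY * H₁ᵀ + 1) (H₁ * SY) (SY * H₁ᵀ) SY) ∧
        q.map restrict₂Y
          = mvGaussian 0 (fromBlocks (H₂ * SY * H₂ᵀ + 1) (H₂ * SY) (SY * H₂ᵀ) SY)},
      mutualInfo (q.map (MeasurableEquiv.sumPiEquivProdPi fun _ => ℝ)))
    = ⨅ M ∈ {M : Matrix (Fin d₁) (Fin d₂) ℝ | (fromBlocks 1 M Mᵀ 1).PosDef},
        ((1/2 * Real.log
            (((fromRows H₁ H₂) * SY * (fromRows H₁ H₂)ᵀ + fromBlocks 1 M Mᵀ 1).det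
              / (fromBlocks 1 M Mᵀ 1).det) : ℝ) : EReal) := by
  have hrow₁ := isCenteredGaussian_mvGaussian (posDef_channelCov H₁ hSY PosDef.one)
  have hrow₂ := isCenteredGaussian_mvGaussian (posDef_channelCov H₂ hSY PosDef.one)
  refine le_antisymm (le_iInf₂ fun M hM => ?_) (le_iInf₂ fun q ⟨hq, hq₁, hq₂⟩ => ?_)
  · have hq := isCenteredGaussian_mvGaussian (posDef_channelCov (fromRows H₁ H₂) hSY hM)
    have hq₁ := hq.map_comp (Sum.map Sum.inl id)
    have hq₂ := hq.map_comp (Sum.map Sum.inr id)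
    rw [channelCov_submatrix_inl] at hq₁
    rw [channelCov_submatrix_inr] at hq₂
    refine (iInf₂_le _ ⟨hq.isGaussianMeasure, ?_, ?_⟩).trans
      (hq.mutualInfo_eq_channelInfo hSY hM).le
    · exact funext restrict₁Y_eq_comp ▸ hq₁.measure_ext hrow₁
    · exact funext restrict₂Y_eq_comp ▸ hq₂.measure_ext hrow₂
  · rw [funext restrict₁Y_eq_comp] at hq₁
    rw [funext restrict₂Y_eq_comp] at hq₂
    obtain ⟨M, hM⟩ := hq.exists_isCenteredGaussian_channelCov (hq₁ ▸ hrow₁) (hq₂ ▸ hrow₂)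
    exact iInf_channelInfo_le_mutualInfo hM hSY
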